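/- arXiv:2009.12203 — 3 statements merged into one kernel-verified Lean document; each statement's English description precedes it below -/
import Mathlib

section
/- Let B ∈ ℍ^{r×n}, X ∈ ℍ^{m×n}, A' ∈ ℍ^{m×r} be quaternion matrices and λ > 0 a real number. Define g(A) = ½‖A·B − X‖_F² + (λ/2)‖A − A'‖_F² for A ∈ ℍ^{m×r}. Then the matrix A₀ = (X·Bᴴ + λ·A')·(B·Bᴴ + λ·I)⁻¹ is a global minimizer of g: for every A ∈ ℍ^{m×r}, g(A₀) ≤ g(A). -/
/-!
Put `M = B Bᴴ + λ`, which is Hermitian, and `C = X Bᴴ + λ A'`. Before taking traces, the cost is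
`A M Aᴴ - A Cᴴ - C Aᴴ + const`, so if `A₀ M = C` then completing the square turns it into
`(A - A₀) M (A - A₀)ᴴ` plus a term that does not depend on `A`. The real part of the trace of
`V M Vᴴ = (V B)(V B)ᴴ + λ V Vᴴ` is `‖V B‖² + λ ‖V‖²`, which is nonnegative, and vanishes only for
`V = 0`; the latter makes `M` right regular, hence invertible over an Artinian ring.
-/

open scoped Quaternion Matrix

/-- The Frobenius norm of a quaternion matrix. -/
noncomputable def frob {m n : ℕ} (A : Matrix (Fin m) (Fin n) ℍ[ℝ]) : ℝ :=
  Real.sqrt (∑ i, ∑ j, ‖A i j‖ ^ 2)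

section CompletingTheSquare

variable {S R m r n : Type*} [CommSemiring S] [Ring R] [StarRing R] [Algebra S R]
  [DecidableEq r] [Fintype n]

/-- The matrix `B Bᴴ + λ` of the normal equation `A (B Bᴴ + λ) = X Bᴴ + λ A'`. -/
def ridgeMatrix (B : Matrix r n R) (lam : S) : Matrix r r R :=
  B * Bᴴ + lam • (1 : Matrix r r R)

theorem isHermitian_ridgeMatrix [Star S] [TrivialStar S] [StarModule S R] (B : Matrix r n R)
    (lam : S) : (ridgeMatrix B lam).IsHermitian := by
  simp [Matrix.IsHermitian, ridgeMatrix]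

variable [Fintype r]

/-- The regularized least squares cost before taking traces: the real part of the trace of this
matrix is twice the value of the cost at `A`. -/
def ridgeGram (B : Matrix r n R) (X : Matrix m n R) (A' : Matrix m r R) (lam : S)
    (A : Matrix m r R) : Matrix m m R :=
  (A * B - X) * (A * B - X)ᴴ + lam • ((A - A') * (A - A')ᴴ)

theorem ridgeGram_zero_zero (B : Matrix r n R) (lam : S) (V : Matrix m r R) :
    ridgeGram B 0 0 lam V = V * ridgeMatrix B lam * Vᴴ := by
  simp [ridgeGram, ridgeMatrix, Matrix.mul_add, Matrix.add_mul, Matrix.mul_assoc]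

variable [Star S] [TrivialStar S] [StarModule S R]

theorem ridgeGram_eq_quadratic (B : Matrix r n R) (X : Matrix m n R) (A' : Matrix m r R) (lam : S)
    (A : Matrix m r R) :
    ridgeGram B X A' lam A =
      A * ridgeMatrix B lam * Aᴴ - A * (X * Bᴴ + lam • A')ᴴ - (X * Bᴴ + lam • A') * Aᴴ +
        (X * Xᴴ + lam • (A' * A'ᴴ)) := by
  simp only [ridgeGram, ridgeMatrix, Matrix.conjTranspose_sub, Matrix.conjTranspose_add,
    Matrix.conjTranspose_mul, Matrix.conjTranspose_smul, Matrix.conjTranspose_conjTranspose,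
    star_trivial, Matrix.mul_add, Matrix.add_mul, Matrix.mul_sub, Matrix.sub_mul, Matrix.mul_smul,
    Matrix.smul_mul, Matrix.mul_one, Matrix.mul_assoc, smul_sub]
  abel

theorem ridgeGram_eq_add_of_normal_eq {B : Matrix r n R} {X : Matrix m n R} {A' : Matrix m r R}
    {lam : S} {A₀ : Matrix m r R} (hA₀ : A₀ * ridgeMatrix B lam = X * Bᴴ + lam • A')
    (A : Matrix m r R) :
    ridgeGram B X A' lam A = ridgeGram B X A' lam A₀ + ridgeGram B 0 0 lam (A - A₀) := by
  have hA₀_conj : (A₀ * ridgeMatrix B lam)ᴴ = ridgeMatrix B lam * A₀ᴴ := by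
    rw [Matrix.conjTranspose_mul, isHermitian_ridgeMatrix]
  rw [ridgeGram_zero_zero, ridgeGram_eq_quadratic, ridgeGram_eq_quadratic, ← hA₀, hA₀_conj]
  simp only [Matrix.conjTranspose_sub, Matrix.mul_sub, Matrix.sub_mul, Matrix.mul_assoc]
  abel

end CompletingTheSquare

section FrobeniusNorm

open scoped Matrix.Norms.Frobenius

theorem frobenius_norm_eq_sqrt {m n α : Type*} [Fintype m] [Fintype n] [SeminormedAddCommGroup α]
    (A : Matrix m n α) : ‖A‖ = √(∑ i, ∑ j, ‖A i j‖ ^ 2) := by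
  simp only [Matrix.frobenius_norm_def, Real.sqrt_eq_rpow, Real.rpow_two]

variable {R m r n : Type*} [NormedRing R] [Fintype m] [Fintype r] [Fintype n]

/-- The regularized least squares cost `g(A) = ½‖A B - X‖² + (λ/2)‖A - A'‖²`, for the
Frobenius norm. -/
noncomputable def ridgeCost (B : Matrix r n R) (X : Matrix m n R) (A' : Matrix m r R) (lam : ℝ)
    (A : Matrix m r R) : ℝ :=
  (1 / 2) * ‖A * B - X‖ ^ 2 + (lam / 2) * ‖A - A'‖ ^ 2

theorem ridgeCost_nonneg (B : Matrix r n R) (X : Matrix m n R) (A' : Matrix m r R) {lam : ℝ}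
    (hlam : 0 ≤ lam) (A : Matrix m r R) : 0 ≤ ridgeCost B X A' lam A := by
  unfold ridgeCost
  positivity

theorem eq_of_ridgeCost_eq_zero {B : Matrix r n R} {X : Matrix m n R} {A' : Matrix m r R}
    {lam : ℝ} (hlam : 0 < lam) {A : Matrix m r R} (hA : ridgeCost B X A' lam A = 0) : A = A' := by
  have h_reg : (lam / 2) * ‖A - A'‖ ^ 2 = 0 :=
    ((add_eq_zero_iff_of_nonneg (by positivity) (by positivity)).mp hA).2
  simpa [hlam.ne', sub_eq_zero] using h_reg

variable [StarRing R] [NormedAlgebra ℝ R]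

-- For `R = ℝ, ℂ, ℍ` the functional `τ` is the real part.
theorem map_trace_mul_conjTranspose_self {τ : R →ₗ[ℝ] ℝ} (hτ : ∀ x, τ (x * star x) = ‖x‖ ^ 2)
    (A : Matrix m n R) : τ (A * Aᴴ).trace = ‖A‖ ^ 2 := by
  rw [frobenius_norm_eq_sqrt, Real.sq_sqrt (by positivity)]
  simp only [Matrix.trace, Matrix.diag_apply, Matrix.mul_apply, Matrix.conjTranspose_apply,
    map_sum, hτ]

theorem ridgeCost_eq_map_trace {τ : R →ₗ[ℝ] ℝ} (hτ : ∀ x, τ (x * star x) = ‖x‖ ^ 2)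
    (B : Matrix r n R) (X : Matrix m n R) (A' : Matrix m r R) (lam : ℝ) (A : Matrix m r R) :
    ridgeCost B X A' lam A = (1 / 2) * τ (ridgeGram B X A' lam A).trace := by
  rw [ridgeGram, Matrix.trace_add, Matrix.trace_smul, map_add, map_smul, smul_eq_mul,
    map_trace_mul_conjTranspose_self hτ, map_trace_mul_conjTranspose_self hτ, ridgeCost]
  ring

variable [DecidableEq r]

theorem isRightRegular_ridgeMatrix {τ : R →ₗ[ℝ] ℝ} (hτ : ∀ x, τ (x * star x) = ‖x‖ ^ 2)
    (B : Matrix r n R) {lam : ℝ} (hlam : 0 < lam) : IsRightRegular (ridgeMatrix B lam) := by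
  refine isRightRegular_of_non_zero_divisor _ fun V hV => ?_
  have h_cost : ridgeCost B 0 0 lam V = 0 := by
    simp [ridgeCost_eq_map_trace hτ, ridgeGram_zero_zero, hV]
  exact eq_of_ridgeCost_eq_zero hlam h_cost

theorem isUnit_ridgeMatrix [IsArtinianRing R] {τ : R →ₗ[ℝ] ℝ}
    (hτ : ∀ x, τ (x * star x) = ‖x‖ ^ 2) (B : Matrix r n R) {lam : ℝ} (hlam : 0 < lam) :
    IsUnit (ridgeMatrix B lam) :=
  IsArtinianRing.isUnit_iff_isRightRegular.mpr (isRightRegular_ridgeMatrix hτ B hlam)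

variable [StarModule ℝ R]

theorem ridgeCost_eq_add_of_normal_eq {τ : R →ₗ[ℝ] ℝ} (hτ : ∀ x, τ (x * star x) = ‖x‖ ^ 2)
    {B : Matrix r n R} {X : Matrix m n R} {A' : Matrix m r R} {lam : ℝ} {A₀ : Matrix m r R}
    (hA₀ : A₀ * ridgeMatrix B lam = X * Bᴴ + lam • A') (A : Matrix m r R) :
    ridgeCost B X A' lam A = ridgeCost B X A' lam A₀ + ridgeCost B 0 0 lam (A - A₀) := by
  simp only [ridgeCost_eq_map_trace hτ]
  rw [ridgeGram_eq_add_of_normal_eq hA₀, Matrix.trace_add, map_add, mul_add]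

theorem ridgeCost_le_of_normal_eq {τ : R →ₗ[ℝ] ℝ} (hτ : ∀ x, τ (x * star x) = ‖x‖ ^ 2)
    {B : Matrix r n R} {X : Matrix m n R} {A' : Matrix m r R} {lam : ℝ} (hlam : 0 ≤ lam)
    {A₀ : Matrix m r R} (hA₀ : A₀ * ridgeMatrix B lam = X * Bᴴ + lam • A') (A : Matrix m r R) :
    ridgeCost B X A' lam A₀ ≤ ridgeCost B X A' lam A := by
  rw [ridgeCost_eq_add_of_normal_eq hτ hA₀ A]
  exact le_add_of_nonneg_right (ridgeCost_nonneg B 0 0 hlam (A - A₀))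

theorem global_min_A_general [IsArtinianRing R] {τ : R →ₗ[ℝ] ℝ}
    (hτ : ∀ x, τ (x * star x) = ‖x‖ ^ 2) (B : Matrix r n R) (X : Matrix m n R)
    (A' : Matrix m r R) {lam : ℝ} (hlam : 0 < lam) (A : Matrix m r R) :
    ridgeCost B X A' lam ((X * Bᴴ + lam • A') * Ring.inverse (ridgeMatrix B lam)) ≤
      ridgeCost B X A' lam A := by
  refine ridgeCost_le_of_normal_eq hτ hlam.le ?_ A
  rw [Matrix.mul_assoc, Ring.inverse_mul_cancel _ (isUnit_ridgeMatrix hτ B hlam),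
    Matrix.mul_one]

end FrobeniusNorm

section Quaternion

open scoped Matrix.Norms.Frobenius

instance {S R : Type*} [CommRing R] [Monoid S] [DistribMulAction S R] [Star S] [TrivialStar S] :
    StarModule S ℍ[R] where
  star_smul s q := by rw [star_trivial s, Quaternion.star_smul]

theorem reₗ_mul_star_self (q : ℍ[ℝ]) :
    QuaternionAlgebra.reₗ (-1 : ℝ) 0 (-1) (q * star q) = ‖q‖ ^ 2 :=
  real_inner_self_eq_norm_sq q

theorem frob_eq_frobenius_norm {m n : ℕ} (A : Matrix (Fin m) (Fin n) ℍ[ℝ]) : frob A = ‖A‖ :=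
  (frobenius_norm_eq_sqrt A).symm

end Quaternion

/-- The matrix A₀ = (X·Bᴴ + λ·A')·(B·Bᴴ + λ·I)⁻¹ is a global minimizer of
g(A) = ½‖A·B − X‖_F² + (λ/2)‖A − A'‖_F². -/
theorem global_min_A {m r n : ℕ}
    (B : Matrix (Fin r) (Fin n) ℍ[ℝ]) (X : Matrix (Fin m) (Fin n) ℍ[ℝ])
    (A' : Matrix (Fin m) (Fin r) ℍ[ℝ]) (lam : ℝ) (hlam : 0 < lam) :
    ∀ A : Matrix (Fin m) (Fin r) ℍ[ℝ],
      (1 / 2) * frob ((X * Bᴴ + lam • A') *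
            Ring.inverse (B * Bᴴ + lam • (1 : Matrix (Fin r) (Fin r) ℍ[ℝ])) * B - X) ^ 2 +
        (lam / 2) * frob ((X * Bᴴ + lam • A') *
            Ring.inverse (B * Bᴴ + lam • (1 : Matrix (Fin r) (Fin r) ℍ[ℝ])) - A') ^ 2 ≤
      (1 / 2) * frob (A * B - X) ^ 2 + (lam / 2) * frob (A - A') ^ 2 := by
  intro A
  simpa only [ridgeCost, ridgeMatrix, frob_eq_frobenius_norm] using
    global_min_A_general reₗ_mul_star_self B X A' hlam A
end

section
/- Fix D ∈ ℍ^{m×n}, Ω ⊆ Fin m × Fin n, and λ > 0. Let A ∈ ℍ^{m×r}, B ∈ ℍ^{r×n}, and define X ∈ ℍ^{m×n} by X_{ij} = D_{ij} for (i,j) ∈ Ω and X_{ij} = (A·B)_{ij} for (i,j) ∉ Ω. Set A⁺ = (X·Bᴴ + λ·A)·(B·Bᴴ + λ·I)⁻¹ and B⁺ = ((A⁺)ᴴ·A⁺ + λ·I)⁻¹·((A⁺)ᴴ·X + λ·B). If A⁺ = A and B⁺ = B, then (A·B − X)·Bᴴ = 0, Aᴴ·(A·B − X) = 0, and X_{ij}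 = (A·B)_{ij} for all (i,j) ∉ Ω (so (A, B, X) is a stationary point of the constrained problem). -/
open scoped Quaternion Matrix

/-!
Since the Gram matrices `B * Bᴴ` and `Aᴴ * A` are positive semidefinite, their shifts by `lam > 0`
are positive definite, hence invertible, and the inverses in the updates can be cleared. In
`X * Bᴴ + lam • A = A * (B * Bᴴ + lam • 1)` the terms `lam • A` cancel, which leaves the normal
equation `X * Bᴴ = A * B * Bᴴ`; the other factor is symmetric.

Quaternions enter only as a division ring with a star order, namely the one whose nonnegative
elements are the nonnegative reals.
-/

section Inverse

variable {m n R : Type*} [Fintype n] [DecidableEq n] [Semiring R] {U : Matrix n n R}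

lemma matrix_mul_inverse_eq_iff_eq_mul (hU : IsUnit U) {Y A : Matrix m n R} :
    Y * Ring.inverse U = A ↔ Y = A * U := by
  constructor
  · rintro rfl
    rw [Matrix.mul_assoc, Ring.inverse_mul_cancel U hU, Matrix.mul_one]
  · rintro rfl
    rw [Matrix.mul_assoc, Ring.mul_inverse_cancel U hU, Matrix.mul_one]

lemma matrix_inverse_mul_eq_iff_eq_mul (hU : IsUnit U) {Y B : Matrix n m R} :
    Ring.inverse U * Y = B ↔ Y = U * B := by
  constructor
  · rintro rfl
    rw [← Matrix.mul_assoc, Ring.mul_inverse_cancel U hU, Matrix.one_mul]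
  · rintro rfl
    rw [← Matrix.mul_assoc, Ring.inverse_mul_cancel U hU, Matrix.one_mul]

end Inverse

lemma isUnit_of_posDef_of_isArtinianRing {n R : Type*} [Fintype n] [DecidableEq n] [Ring R]
    [IsArtinianRing R] [PartialOrder R] [StarRing R] {M : Matrix n n R} (hM : M.PosDef) :
    IsUnit M := by
  rw [IsArtinianRing.isUnit_iff_isRightRegular, Matrix.isRightRegular_iff_vecMul_injective]
  refine (injective_iff_map_eq_zero M.vecMulLinear).2 fun v (hv : v ᵥ* M = 0) ↦ ?_
  by_contra hv_ne
  have hpos : 0 < v ⬝ᵥ (M *ᵥ star v) := by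
    simpa only [star_star] using hM.dotProduct_mulVec_pos (star_ne_zero.2 hv_ne)
  rw [Matrix.dotProduct_mulVec, hv, zero_dotProduct] at hpos
  exact hpos.false

section Updates

variable {m r n α R : Type*}

section Definitions

variable [Fintype n] [Fintype r] [DecidableEq r] [Semiring R] [Star R] [SMul α R]

/-- The update `A⁺` of the left factor: the proximal least squares step which, for fixed `B`, fits
`A⁺ * B` to `X` with penalty weight `lam` on the squared distance of `A⁺` from `A`. -/
noncomputable def leftFactorUpdate (lam : α) (X : Matrix m n R) (A : Matrix m r R)
    (B : Matrix r n R) : Matrix m r R :=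
  (X * Bᴴ + lam • A) * Ring.inverse (B * Bᴴ + lam • (1 : Matrix r r R))

variable [Fintype m]

/-- The update `B⁺` of the right factor, the counterpart of `leftFactorUpdate` for fixed `A`. In the
iteration, `A` is the left factor that has already been updated. -/
noncomputable def rightFactorUpdate (lam : α) (X : Matrix m n R) (A : Matrix m r R)
    (B : Matrix r n R) : Matrix r n R :=
  Ring.inverse (Aᴴ * A + lam • (1 : Matrix r r R)) * (Aᴴ * X + lam • B)

end Definitions

variable [Fintype r] [DecidableEq r] [DivisionRing R] [PartialOrder R] [StarRing R]
  [StarOrderedRing R] [CommSemiring α] [PartialOrder α] [StarRing α] [StarOrderedRing α]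
  [Algebra α R] [StarModule α R] [PosSMulStrictMono α R] {lam : α}

lemma isUnit_posSemidef_add_smul_one {G : Matrix r r R} (hG : G.PosSemidef) (hlam : 0 < lam) :
    IsUnit (G + lam • (1 : Matrix r r R)) :=
  isUnit_of_posDef_of_isArtinianRing (.posSemidef_add hG (Matrix.PosDef.one.smul hlam))

lemma leftFactorUpdate_eq_self_iff [Fintype n] (hlam : 0 < lam) {X : Matrix m n R}
    {A : Matrix m r R} {B : Matrix r n R} :
    leftFactorUpdate lam X A B = A ↔ (A * B - X) * Bᴴ = 0 := by
  have hunit := isUnit_posSemidef_add_smul_one (Matrix.posSemidef_self_mul_conjTranspose B) hlam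
  calc leftFactorUpdate lam X A B = A
      ↔ X * Bᴴ + lam • A = A * (B * Bᴴ + lam • 1) := matrix_mul_inverse_eq_iff_eq_mul hunit
    _ ↔ X * Bᴴ = A * B * Bᴴ := by
      rw [Matrix.mul_add, Matrix.mul_smul, Matrix.mul_one, add_left_inj, Matrix.mul_assoc]
    _ ↔ (A * B - X) * Bᴴ = 0 := by rw [Matrix.sub_mul, sub_eq_zero, eq_comm]

lemma rightFactorUpdate_eq_self_iff [Fintype m] (hlam : 0 < lam) {X : Matrix m n R}
    {A : Matrix m r R} {B : Matrix r n R} :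
    rightFactorUpdate lam X A B = B ↔ Aᴴ * (A * B - X) = 0 := by
  have hunit := isUnit_posSemidef_add_smul_one (Matrix.posSemidef_conjTranspose_mul_self A) hlam
  calc rightFactorUpdate lam X A B = B
      ↔ Aᴴ * X + lam • B = (Aᴴ * A + lam • 1) * B := matrix_inverse_mul_eq_iff_eq_mul hunit
    _ ↔ Aᴴ * X = Aᴴ * (A * B) := by
      rw [Matrix.add_mul, Matrix.smul_mul, Matrix.one_mul, add_left_inj, Matrix.mul_assoc]
    _ ↔ Aᴴ * (A * B - X) = 0 := by rw [Matrix.mul_sub, sub_eq_zero, eq_comm]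

theorem fixed_point_is_stationary_general [Fintype m] [Fintype n] (hlam : 0 < lam)
    {X : Matrix m n R} {A : Matrix m r R} {B : Matrix r n R} :
    leftFactorUpdate lam X A B = A ∧ rightFactorUpdate lam X A B = B ↔
      (A * B - X) * Bᴴ = 0 ∧ Aᴴ * (A * B - X) = 0 :=
  and_congr (leftFactorUpdate_eq_self_iff hlam) (rightFactorUpdate_eq_self_iff hlam)

end Updates

namespace QuaternionOrder

/-- The star order on the real quaternions: `p ≤ q` if and only if `q - p` is a nonnegative real.
As for `ComplexOrder`, it is only available in a scope. -/
scoped instance quaternionPartialOrder : PartialOrder ℍ[ℝ] where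
  le p q := p.re ≤ q.re ∧ p.im = q.im
  le_refl _ := ⟨le_rfl, rfl⟩
  le_trans _ _ _ hpq hqs := ⟨hpq.1.trans hqs.1, hpq.2.trans hqs.2⟩
  le_antisymm p q hpq hqp := by
    rw [← p.re_add_im, ← q.re_add_im, hpq.1.antisymm hqp.1, hpq.2]

lemma quaternion_nonneg_iff_exists_star_mul_self {q : ℍ[ℝ]} : 0 ≤ q ↔ ∃ s, q = star s * s := by
  constructor
  · rintro ⟨hre : 0 ≤ q.re, him : 0 = q.im⟩
    refine ⟨(√q.re : ℝ), ?_⟩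
    rw [Quaternion.star_mul_self, Quaternion.normSq_coe, Real.sq_sqrt hre]
    simpa [← him] using q.re_add_im.symm
  · rintro ⟨s, rfl⟩
    rw [Quaternion.star_mul_self]
    exact ⟨Quaternion.normSq_nonneg, (Quaternion.im_coe _).symm⟩

scoped instance quaternionStarOrderedRing : StarOrderedRing ℍ[ℝ] :=
  .of_nonneg_iff'
    (fun h z ↦ ⟨add_le_add_right h.1 z.re, by rw [Quaternion.im_add, Quaternion.im_add, h.2]⟩)
    fun _ ↦ quaternion_nonneg_iff_exists_star_mul_self

scoped instance quaternionStarModule : StarModule ℝ ℍ[ℝ] :=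
  ⟨Quaternion.star_smul⟩

end QuaternionOrder

/-- If one LRQD iteration leaves (A, B) unchanged, then (A, B, X) is a stationary
point of the constrained problem. -/
theorem fixed_point_is_stationary {m r n : ℕ}
    (D : Matrix (Fin m) (Fin n) ℍ[ℝ]) (Ω : Set (Fin m × Fin n))
    (lam : ℝ) (hlam : 0 < lam)
    (A : Matrix (Fin m) (Fin r) ℍ[ℝ]) (B : Matrix (Fin r) (Fin n) ℍ[ℝ])
    (X : Matrix (Fin m) (Fin n) ℍ[ℝ])
    (hXin : ∀ p ∈ Ω, X p.1 p.2 = D p.1 p.2)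
    (hXout : ∀ p : Fin m × Fin n, p ∉ Ω → X p.1 p.2 = (A * B) p.1 p.2)
    (Aplus : Matrix (Fin m) (Fin r) ℍ[ℝ]) (Bplus : Matrix (Fin r) (Fin n) ℍ[ℝ])
    (hAplus : Aplus = (X * Bᴴ + lam • A) *
      Ring.inverse (B * Bᴴ + lam • (1 : Matrix (Fin r) (Fin r) ℍ[ℝ])))
    (hBplus : Bplus = Ring.inverse (Aplusᴴ * Aplus + lam • (1 : Matrix (Fin r) (Fin r) ℍ[ℝ])) *
      (Aplusᴴ * X + lam • B))
    (hA : Aplus = A) (hB : Bplus = B) :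
    (A * B - X) * Bᴴ = 0 ∧ Aᴴ * (A * B - X) = 0 ∧
      ∀ p : Fin m × Fin n, p ∉ Ω → X p.1 p.2 = (A * B) p.1 p.2 := by
  subst hA hB
  open scoped QuaternionOrder in
  exact and_assoc.1 ⟨(fixed_point_is_stationary_general hlam).1 ⟨hAplus.symm, hBplus.symm⟩, hXout⟩
end

section
/- Fix D ∈ ℍ^{m×n}, Ω ⊆ Fin m × Fin n, and λ > 0, and set λ₀ = min(λ, 1). Let A ∈ ℍ^{m×r}, B ∈ ℍ^{r×n}, define X ∈ ℍ^{m×n} by X_{ij} = D_{ij} for (i,j) ∈ Ω and X_{ij} = (A·B)_{ij} otherwise; let A⁺ = (X·Bᴴ + λ·A)·(B·Bᴴ + λ·I)⁻¹, B⁺ = ((A⁺)ᴴ·A⁺ + λ·I)⁻¹·((A⁺)ᴴ·X + λ·B), and define X⁺ ∈ ℍ^{m×n} by X⁺_{ij} = D_{ij} for (i,j) ∈ Ω and X⁺_{ij} = (A⁺·B⁺)_{ij} otherwise. Then ½‖A·B − X‖_F² − ½‖A⁺·B⁺ − X⁺‖_F² ≥ (λ₀/2)·(‖A − A⁺‖_F²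 + ‖B − B⁺‖_F² + ‖X − X⁺‖_F²). -/
open scoped Quaternion Matrix

/-!
Each factor update minimises the squared residual plus a proximal term `λ‖· - old‖²` over one
factor. At the minimiser the residual is orthogonal to the step up to the proximal gradient, so
expanding the old squared residual around the new one leaves a gain of at least `2λ‖step‖²`. The
completion update projects the product onto the matrices with prescribed entries on `Ω`, and the
gain is given by Pythagoras.
-/

section FrobeniusInnerProduct

open scoped Matrix.Norms.Frobenius InnerProductSpace

variable {l m n : Type*} [Fintype l] [Fintype m] [Fintype n]

lemma frobenius_norm_sq {E : Type*} [SeminormedAddCommGroup E] (P : Matrix m n E) :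
    ‖P‖ ^ 2 = ∑ i, ∑ j, ‖P i j‖ ^ 2 := by
  have hsum : 0 ≤ ∑ i, ∑ j, ‖P i j‖ ^ 2 := by positivity
  simp only [Matrix.frobenius_norm_def, Real.rpow_two, ← Real.sqrt_eq_rpow, Real.sq_sqrt hsum]

lemma frob_eq_norm {p q : ℕ} (P : Matrix (Fin p) (Fin q) ℍ[ℝ]) : frob P = ‖P‖ := by
  rw [frob, ← frobenius_norm_sq, Real.sqrt_sq (norm_nonneg P)]

/-- The entrywise inner product of matrices over an inner product space, which induces the
Frobenius norm. It is a scoped choice, like the Frobenius norm itself, hence not a global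
instance. -/
noncomputable abbrev frobeniusInnerProductSpace {𝕜 E : Type*} [RCLike 𝕜]
    [SeminormedAddCommGroup E] [InnerProductSpace 𝕜 E] : InnerProductSpace 𝕜 (Matrix m n E) where
  inner P Q := ∑ i, ∑ j, ⟪P i j, Q i j⟫_𝕜
  norm_sq_eq_re_inner P := by
    simp only [frobenius_norm_sq, map_sum, ← norm_sq_eq_re_inner]
  conj_inner_symm P Q := by simp only [map_sum, inner_conj_symm]
  add_left P Q R := by
    simp only [Matrix.add_apply, inner_add_left, Finset.sum_add_distrib]
  smul_left P Q c := by simp only [Matrix.smul_apply, inner_smul_left, Finset.mul_sum]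

attribute [local instance] frobeniusInnerProductSpace

lemma frobenius_inner_def {𝕜 E : Type*} [RCLike 𝕜] [SeminormedAddCommGroup E]
    [InnerProductSpace 𝕜 E] (P Q : Matrix m n E) : ⟪P, Q⟫_𝕜 = ∑ i, ∑ j, ⟪P i j, Q i j⟫_𝕜 := rfl

lemma quaternion_inner_mul_right_eq (a b c : ℍ[ℝ]) : ⟪a * b, c⟫_ℝ = ⟪a, c * star b⟫_ℝ := by
  simp only [Quaternion.inner_def, star_mul, star_star, mul_assoc]

lemma quaternion_inner_mul_left_eq (a b c : ℍ[ℝ]) : ⟪a * b, c⟫_ℝ = ⟪b, star a * c⟫_ℝ := by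
  simp only [Quaternion.inner_def, star_mul, star_star, Quaternion.re_mul, Quaternion.re_star,
    Quaternion.imI_mul, Quaternion.imJ_mul, Quaternion.imK_mul, Quaternion.imI_star,
    Quaternion.imJ_star, Quaternion.imK_star]
  ring

lemma frobenius_inner_mul_right_eq (P : Matrix m l ℍ[ℝ]) (Q : Matrix l n ℍ[ℝ])
    (R : Matrix m n ℍ[ℝ]) : ⟪P * Q, R⟫_ℝ = ⟪P, R * Qᴴ⟫_ℝ := by
  simp only [frobenius_inner_def, Matrix.mul_apply, Matrix.conjTranspose_apply, sum_inner,
    inner_sum, quaternion_inner_mul_right_eq]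
  exact Finset.sum_congr rfl fun i _ => Finset.sum_comm

lemma frobenius_inner_mul_left_eq (P : Matrix m l ℍ[ℝ]) (Q : Matrix l n ℍ[ℝ])
    (R : Matrix m n ℍ[ℝ]) : ⟪P * Q, R⟫_ℝ = ⟪Q, Pᴴ * R⟫_ℝ := by
  simp only [frobenius_inner_def, Matrix.mul_apply, Matrix.conjTranspose_apply, sum_inner,
    inner_sum, quaternion_inner_mul_left_eq]
  rw [Finset.sum_comm_cycle]
  exact Finset.sum_congr rfl fun k _ => Finset.sum_comm

lemma isUnit_mul_conjTranspose_add_smul_one [DecidableEq m] (C : Matrix m n ℍ[ℝ]) {c : ℝ}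
    (hc : 0 < c) : IsUnit (C * Cᴴ + c • (1 : Matrix m m ℍ[ℝ])) := by
  rw [IsArtinianRing.isUnit_iff_isRightRegular, isRightRegular_iff_left_eq_zero_of_mul]
  intro Y hY
  have hinner : ‖Y * C‖ ^ 2 + c * ‖Y‖ ^ 2 = 0 := by
    calc ‖Y * C‖ ^ 2 + c * ‖Y‖ ^ 2
        = ⟪Y, Y * (C * Cᴴ + c • (1 : Matrix m m ℍ[ℝ]))⟫_ℝ := by
          rw [mul_add, ← Matrix.mul_assoc, mul_smul_comm, mul_one, inner_add_right,
            inner_smul_right, ← frobenius_inner_mul_right_eq, real_inner_self_eq_norm_sq,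
            real_inner_self_eq_norm_sq]
      _ = 0 := by rw [hY, inner_zero_right]
  have hnorm : ‖Y‖ ^ 2 = 0 := by nlinarith [sq_nonneg ‖Y * C‖, sq_nonneg ‖Y‖]
  exact norm_eq_zero.mp (sq_eq_zero_iff.mp hnorm)

/-- The equation `hnormal` says that `x'` is a critical point of
`u ↦ ‖T u - y‖ ^ 2 + c * ‖u - x‖ ^ 2`. -/
lemma norm_sq_sub_le_of_proximal_step {E F : Type*} [SeminormedAddCommGroup E]
    [InnerProductSpace ℝ E] [SeminormedAddCommGroup F] [InnerProductSpace ℝ F]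
    (T : E →ₗ[ℝ] F) (S : F →ₗ[ℝ] E) (hadj : ∀ u v, ⟪T u, v⟫_ℝ = ⟪u, S v⟫_ℝ) {c : ℝ} {x x' : E}
    {y : F} (hnormal : S (T x') + c • x' = S y + c • x) :
    ‖T x' - y‖ ^ 2 + 2 * c * ‖x - x'‖ ^ 2 ≤ ‖T x - y‖ ^ 2 := by
  have hgrad : S (T x' - y) = c • (x - x') := by
    rw [map_sub, smul_sub, sub_eq_sub_iff_add_eq_add, hnormal, add_comm]
  have hcross : ⟪T x' - y, T (x - x')⟫_ℝ = c * ‖x - x'‖ ^ 2 := by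
    rw [real_inner_comm, hadj, hgrad, inner_smul_right, real_inner_self_eq_norm_sq]
  calc ‖T x' - y‖ ^ 2 + 2 * c * ‖x - x'‖ ^ 2
      ≤ ‖T x' - y‖ ^ 2 + 2 * ⟪T x' - y, T (x - x')⟫_ℝ + ‖T (x - x')‖ ^ 2 := by
        rw [hcross]
        linarith [sq_nonneg ‖T (x - x')‖]
    _ = ‖T x - y‖ ^ 2 := by
        rw [← norm_add_sq_real, map_sub, sub_add_sub_comm, add_comm (T x'),
          add_sub_add_right_eq_sub]

lemma norm_sq_mul_sub_le_of_left_update [DecidableEq l] {c : ℝ} (hc : 0 < c)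
    (B : Matrix l n ℍ[ℝ]) (X : Matrix m n ℍ[ℝ]) {A A' : Matrix m l ℍ[ℝ]}
    (hA' : A' = (X * Bᴴ + c • A) * Ring.inverse (B * Bᴴ + c • (1 : Matrix l l ℍ[ℝ]))) :
    ‖A' * B - X‖ ^ 2 + 2 * c * ‖A - A'‖ ^ 2 ≤ ‖A * B - X‖ ^ 2 := by
  have hnormal : A' * B * Bᴴ + c • A' = X * Bᴴ + c • A := by
    calc A' * B * Bᴴ + c • A' = A' * (B * Bᴴ + c • (1 : Matrix l l ℍ[ℝ])) := by
          rw [Matrix.mul_add, Matrix.mul_assoc, Matrix.mul_smul, Matrix.mul_one]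
      _ = X * Bᴴ + c • A := by
          rw [hA', Matrix.mul_assoc,
            Ring.inverse_mul_cancel _ (isUnit_mul_conjTranspose_add_smul_one B hc), Matrix.mul_one]
  exact norm_sq_sub_le_of_proximal_step (mulRightLinearMap m ℝ B)
    (mulRightLinearMap m ℝ Bᴴ) (fun P R => frobenius_inner_mul_right_eq P B R) hnormal

lemma norm_sq_mul_sub_le_of_right_update [DecidableEq l] {c : ℝ} (hc : 0 < c)
    (A : Matrix m l ℍ[ℝ]) (X : Matrix m n ℍ[ℝ]) {B B' : Matrix l n ℍ[ℝ]}
    (hB' : B' = Ring.inverse (Aᴴ * A + c • (1 : Matrix l l ℍ[ℝ])) * (Aᴴ * X + c • B)) :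
    ‖A * B' - X‖ ^ 2 + 2 * c * ‖B - B'‖ ^ 2 ≤ ‖A * B - X‖ ^ 2 := by
  have hunit : IsUnit (Aᴴ * A + c • (1 : Matrix l l ℍ[ℝ])) := by
    simpa only [Matrix.conjTranspose_conjTranspose] using
      isUnit_mul_conjTranspose_add_smul_one Aᴴ hc
  have hnormal : Aᴴ * (A * B') + c • B' = Aᴴ * X + c • B := by
    calc Aᴴ * (A * B') + c • B' = (Aᴴ * A + c • (1 : Matrix l l ℍ[ℝ])) * B' := by
          rw [Matrix.add_mul, Matrix.mul_assoc, Matrix.smul_mul, Matrix.one_mul]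
      _ = Aᴴ * X + c • B := by
          rw [hB', ← Matrix.mul_assoc, Ring.mul_inverse_cancel _ hunit, Matrix.one_mul]
  exact norm_sq_sub_le_of_proximal_step (mulLeftLinearMap n ℝ A)
    (mulLeftLinearMap n ℝ Aᴴ) (frobenius_inner_mul_left_eq A) hnormal

lemma norm_sq_sub_eq_add_of_completion {E : Type*} [SeminormedAddCommGroup E] {Ω : Set (m × n)}
    {P X X' : Matrix m n E} (hin : ∀ p ∈ Ω, X p.1 p.2 = X' p.1 p.2)
    (hout : ∀ p ∉ Ω, X' p.1 p.2 = P p.1 p.2) :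
    ‖P - X‖ ^ 2 = ‖P - X'‖ ^ 2 + ‖X - X'‖ ^ 2 := by
  simp only [frobenius_norm_sq, ← Finset.sum_add_distrib, Matrix.sub_apply]
  refine Finset.sum_congr rfl fun i _ => Finset.sum_congr rfl fun j _ => ?_
  by_cases hij : (i, j) ∈ Ω
  · simp [hin (i, j) hij]
  · simp [hout (i, j) hij, norm_sub_rev]

theorem sufficient_decrease_general [DecidableEq l] {Ω : Set (m × n)} {c : ℝ} (hc : 0 < c)
    {A A' : Matrix m l ℍ[ℝ]} {B B' : Matrix l n ℍ[ℝ]} {X X' : Matrix m n ℍ[ℝ]}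
    (hA' : A' = (X * Bᴴ + c • A) * Ring.inverse (B * Bᴴ + c • (1 : Matrix l l ℍ[ℝ])))
    (hB' : B' = Ring.inverse (A'ᴴ * A' + c • (1 : Matrix l l ℍ[ℝ])) * (A'ᴴ * X + c • B))
    (hin : ∀ p ∈ Ω, X p.1 p.2 = X' p.1 p.2) (hout : ∀ p ∉ Ω, X' p.1 p.2 = (A' * B') p.1 p.2) :
    c * (‖A - A'‖ ^ 2 + ‖B - B'‖ ^ 2) + 1 / 2 * ‖X - X'‖ ^ 2 ≤
      1 / 2 * ‖A * B - X‖ ^ 2 - 1 / 2 * ‖A' * B' - X'‖ ^ 2 := by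
  have hstepA := norm_sq_mul_sub_le_of_left_update hc B X hA'
  have hstepB := norm_sq_mul_sub_le_of_right_update hc A' X hB'
  have hstepX := norm_sq_sub_eq_add_of_completion hin hout
  linarith

end FrobeniusInnerProduct

lemma min_one_div_two_mul_add_le {c a b : ℝ} (hc : 0 ≤ c) (ha : 0 ≤ a) (hb : 0 ≤ b) :
    min c 1 / 2 * (a + b) ≤ c * a + 1 / 2 * b := by
  rw [mul_add]
  gcongr
  · linarith [min_le_left c 1]
  · exact min_le_right c 1

/-- Sufficient decrease of the objective f(A,B,X) = ½‖A·B − X‖_F² along one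
LRQD iteration. -/
theorem sufficient_decrease {m r n : ℕ}
    (D : Matrix (Fin m) (Fin n) ℍ[ℝ]) (Ω : Set (Fin m × Fin n))
    (lam : ℝ) (hlam : 0 < lam)
    (A : Matrix (Fin m) (Fin r) ℍ[ℝ]) (B : Matrix (Fin r) (Fin n) ℍ[ℝ])
    (X : Matrix (Fin m) (Fin n) ℍ[ℝ])
    (hXin : ∀ p ∈ Ω, X p.1 p.2 = D p.1 p.2)
    (hXout : ∀ p : Fin m × Fin n, p ∉ Ω → X p.1 p.2 = (A * B) p.1 p.2)
    (Aplus : Matrix (Fin m) (Fin r) ℍ[ℝ]) (Bplus : Matrix (Fin r) (Fin n) ℍ[ℝ])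
    (Xplus : Matrix (Fin m) (Fin n) ℍ[ℝ])
    (hAplus : Aplus = (X * Bᴴ + lam • A) *
      Ring.inverse (B * Bᴴ + lam • (1 : Matrix (Fin r) (Fin r) ℍ[ℝ])))
    (hBplus : Bplus = Ring.inverse (Aplusᴴ * Aplus + lam • (1 : Matrix (Fin r) (Fin r) ℍ[ℝ])) *
      (Aplusᴴ * X + lam • B))
    (hXplusin : ∀ p ∈ Ω, Xplus p.1 p.2 = D p.1 p.2)
    (hXplusout : ∀ p : Fin m × Fin n, p ∉ Ω → Xplus p.1 p.2 = (Aplus * Bplus) p.1 p.2) :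
    (1 / 2) * frob (A * B - X) ^ 2 - (1 / 2) * frob (Aplus * Bplus - Xplus) ^ 2 ≥
      (min lam 1 / 2) *
        (frob (A - Aplus) ^ 2 + frob (B - Bplus) ^ 2 + frob (X - Xplus) ^ 2) := by
  simp only [frob_eq_norm]
  exact (min_one_div_two_mul_add_le hlam.le (by positivity) (by positivity)).trans
    (sufficient_decrease_general hlam hAplus hBplus
      (fun p hp => (hXin p hp).trans (hXplusin p hp).symm) hXplusout)
end
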